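/- arXiv:0901.2611 — 2 statements merged into one kernel-verified Lean document; each statement's English description precedes it below -/
import Mathlib

section
/- Let n ≥ 2 and let A be an associative ring. Let u_1, …, u_n ∈ A be central, let θ_1, …, θ_n ∈ A satisfy θ_i·θ_j = −θ_j·θ_i for i ≠ j, and let Ω_{ij} ∈ A (1 ≤ i, j ≤ n) be central elements with Ω_{ij} = −Ω_{ji} and Ω_{1j} = 0 for all j. For 0 ≤ k ≤ ⌊(n−1)/2⌋ define Φ_k = Σ_{τ ∈ S_n} sgn(τ)·u_{τ(1)}·θ_{τ(2)}·⋯·θ_{τ(n−2k)}·Ω_{τ(n−2k+1)τ(n−2k+2)}·⋯·Ω_{τ(n−1)τ(n)} (sum over all permutations τ of {1,…,n}), and define, summing over all permutations ρ of {2,…,n}, Ξ_k = Σ_ρ sgn(ρ)·θ_{ρ(2)}·⋯·θ_{ρ(n−2k)}·Ω_{ρ(n−2k+1)ρ(n−2k+2)}·⋯·Ω_{ρ(n−1)ρ(n)} for 0 ≤ k ≤ ⌊(n−1)/2⌋, and Υ_k = Σ_ρ sgn(ρ)·u_{ρ(2)}·θ_{ρ(3)}·⋯·θ_{ρ(n−2k)}·Ω_{ρ(n−2k+1)ρ(n−2k+2)}·⋯·Ω_{ρ(n−1)ρ(n)}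 for 0 ≤ k ≤ ⌊(n−2)/2⌋. Then Φ_k = u_1·Ξ_k − (n−2k−1)·θ_1·Υ_k for 0 ≤ k ≤ ⌊(n−2)/2⌋, and if n is odd then Φ_{(n−1)/2} = u_1·Ξ_{(n−1)/2}. -/
/-!
Sort the permutations `τ` in `Φ_k` by the position of the index `1`. In the first position it
contributes `u₁ Ξ_k`; in an `Ω` slot it contributes nothing, since `Ω` vanishes on the index `1`. In
each of the `n - 2k - 1` slots of the `θ`s, say the `q`-th one counted from `0`, moving `θ₁` to the
front costs the sign `(-1) ^ q`, whereas deleting the letter `1` from the word of `τ` changes the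
sign of the permutation by `(-1) ^ (q + 1)`; so each of these slots contributes `-θ₁ Υ_k`.
-/

open Finset

/-- The embedding `Fin (n-1) → Fin n` onto the indices `{1, …, n-1}` (i.e. `{2, …, n}`
in 1-indexed notation). -/
def embSucc (n : ℕ) : Fin (n - 1) → Fin n :=
  fun j => ⟨(j : ℕ) + 1, by have := j.isLt; omega⟩

/-- `Φ_k = Σ_{τ ∈ Sₙ} sgn(τ)·u_{τ(1)}·θ_{τ(2)}⋯θ_{τ(n−2k)}·Ω_{τ(n−2k+1)τ(n−2k+2)}⋯Ω_{τ(n−1)τ(n)}`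
(written 0-indexed: `u` at position `0`, then `n−2k−1` θ's, then `k` Ω's). -/
def chernPhi {A : Type*} [Ring A] (n k : ℕ) (hk : 2 * k + 1 ≤ n)
    (u θ : Fin n → A) (Ω : Fin n → Fin n → A) : A :=
  ∑ τ : Equiv.Perm (Fin n), (Equiv.Perm.sign τ : ℤ) •
    (u (τ ⟨0, by omega⟩) *
      ((List.ofFn fun i => θ (τ i)).tail.take (n - 2 * k - 1)).prod *
      (List.ofFn fun j : Fin k =>
        Ω (τ ⟨n - 2 * k + 2 * (j : ℕ), by have := j.isLt; omega⟩)
          (τ ⟨n - 2 * k + 2 * (j : ℕ) + 1, by have := j.isLt; omega⟩)).prod)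

/-- `Ψ-type sums: Σ_{ρ ∈ S_m} sgn(ρ)·θ_{ρ(1)}⋯θ_{ρ(m−2k)}·Ω_{ρ(m−2k+1)ρ(m−2k+2)}⋯Ω_{ρ(m−1)ρ(m)}`
(written 0-indexed: `m−2k` θ's, then `k` Ω's). -/
def chernPsi {A : Type*} [Ring A] (m k : ℕ) (hk : 2 * k ≤ m)
    (θ : Fin m → A) (Ω : Fin m → Fin m → A) : A :=
  ∑ ρ : Equiv.Perm (Fin m), (Equiv.Perm.sign ρ : ℤ) •
    (((List.ofFn fun i => θ (ρ i)).take (m - 2 * k)).prod *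
      (List.ofFn fun j : Fin k =>
        Ω (ρ ⟨m - 2 * k + 2 * (j : ℕ), by have := j.isLt; omega⟩)
          (ρ ⟨m - 2 * k + 2 * (j : ℕ) + 1, by have := j.isLt; omega⟩)).prod)

/-- The permutation of `{0, …, m}` whose word `τ 0, …, τ m` is that of `ρ`, shifted up by one, with
the letter `0` inserted at position `p`. -/
def insertZeroPerm {m : ℕ} (p : Fin (m + 1)) (ρ : Equiv.Perm (Fin m)) :
    Equiv.Perm (Fin (m + 1)) :=
  Equiv.Perm.decomposeFin.symm (0, ρ) * p.cycleRange

theorem coe_insertZeroPerm {m : ℕ} (p : Fin (m + 1)) (ρ : Equiv.Perm (Fin m)) :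
    ⇑(insertZeroPerm p ρ) = p.insertNth 0 (Fin.succ ∘ ρ) := by
  have hcons : ⇑(Equiv.Perm.decomposeFin.symm (0, ρ)) = Fin.cons 0 (Fin.succ ∘ ρ) := by
    ext i
    cases i using Fin.cases <;> simp
  rw [insertZeroPerm, Equiv.Perm.coe_mul, hcons, Fin.cons_comp_cycleRange]

theorem sign_insertZeroPerm {m : ℕ} (p : Fin (m + 1)) (ρ : Equiv.Perm (Fin m)) :
    Equiv.Perm.sign (insertZeroPerm p ρ) = (-1) ^ (p : ℕ) * Equiv.Perm.sign ρ := by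
  simp [insertZeroPerm, Equiv.Perm.decomposeFin.symm_sign, mul_comm]

theorem insertZeroPerm_bijective (m : ℕ) :
    Function.Bijective fun x : Fin (m + 1) × Equiv.Perm (Fin m) => insertZeroPerm x.1 x.2 := by
  rw [Fintype.bijective_iff_injective_and_card]
  refine ⟨?_, Fintype.card_congr Equiv.Perm.decomposeFin.symm⟩
  rintro ⟨p, ρ⟩ ⟨q, σ⟩ (h : insertZeroPerm p ρ = insertZeroPerm q σ)
  obtain rfl : p = q := by
    apply (insertZeroPerm p ρ).injective
    conv_rhs => rw [h]
    simp only [coe_insertZeroPerm, Fin.insertNth_apply_same]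
  simpa using Equiv.Perm.decomposeFin.symm.injective (mul_right_cancel h)

theorem sum_sign_smul_perm_succ {M : Type*} [AddCommGroup M] {m : ℕ}
    (f : (Fin (m + 1) → Fin (m + 1)) → M) :
    ∑ τ : Equiv.Perm (Fin (m + 1)), (Equiv.Perm.sign τ : ℤ) • f τ =
      ∑ p : Fin (m + 1), (-1 : ℤ) ^ (p : ℕ) • ∑ ρ : Equiv.Perm (Fin m),
        (Equiv.Perm.sign ρ : ℤ) • f (p.insertNth 0 (Fin.succ ∘ ρ)) := by
  rw [← (insertZeroPerm_bijective m).sum_comp, Fintype.sum_prod_type]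
  simp [coe_insertZeroPerm, sign_insertZeroPerm, Finset.smul_sum, mul_smul]

theorem prod_take_ofFn_insertNth_of_anticomm {M : Type*} [Monoid M] [HasDistribNeg M] (x : M) :
    ∀ {m N : ℕ} (f : Fin m → M) (q : Fin (m + 1)), (q : ℕ) ≤ N →
      (∀ i, f i * x = -(x * f i)) →
      ((List.ofFn (q.insertNth x f : Fin (m + 1) → M)).take (N + 1)).prod =
        (-1) ^ (q : ℕ) * (x * ((List.ofFn f).take N).prod)
  | m, N, f, q, hq, hf => by
    cases q using Fin.cases with
    | zero => simp
    | succ q =>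
      obtain ⟨m, rfl⟩ := Nat.exists_eq_add_one.2 q.pos
      obtain ⟨N, rfl⟩ := Nat.exists_eq_add_one.2 ((Nat.succ_pos _).trans_le hq)
      obtain ⟨a, g, rfl⟩ : ∃ a g, f = Fin.cons a g := ⟨_, _, (Fin.cons_self_tail f).symm⟩
      have ih := prod_take_ofFn_insertNth_of_anticomm x g q (N := N) (by simpa using hq)
        fun i => by simpa using hf i.succ
      have ha : a * x = -(x * a) := by simpa using hf 0
      have hsign : a * (-1) ^ (q : ℕ) = (-1) ^ (q : ℕ) * a :=
        ((Commute.neg_one_right a).pow_right q).eq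
      rw [Fin.insertNth_succ_cons]
      simp only [List.ofFn_cons, List.take_succ_cons, List.prod_cons, Fin.val_succ]
      calc a * ((List.ofFn (q.insertNth x g : Fin (m + 1) → M)).take (N + 1)).prod
        _ = a * ((-1) ^ (q : ℕ) * (x * ((List.ofFn g).take N).prod)) := by rw [ih]
        _ = (-1) ^ (q : ℕ) * (a * x * ((List.ofFn g).take N).prod) := by
          simp only [← mul_assoc, hsign]
        _ = (-1) ^ (q + 1 : ℕ) * (x * (a * ((List.ofFn g).take N).prod)) := by
          rw [ha, pow_succ]; simp [mul_assoc]

/-- The monomial `θ_{v(1)} ⋯ θ_{v(m−2k)} · Ω_{v(m−2k+1)v(m−2k+2)} ⋯ Ω_{v(m−1)v(m)}` of a word `v` of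
length `m` (0-indexed here) in an arbitrary set of indices. -/
def chernMonomial {ι A : Type*} [Monoid A] {m : ℕ} (k : ℕ) (hk : 2 * k ≤ m)
    (θ : ι → A) (Ω : ι → ι → A) (v : Fin m → ι) : A :=
  ((List.ofFn fun i => θ (v i)).take (m - 2 * k)).prod *
    (List.ofFn fun j : Fin k =>
      Ω (v ⟨m - 2 * k + 2 * (j : ℕ), by have := j.isLt; omega⟩)
        (v ⟨m - 2 * k + 2 * (j : ℕ) + 1, by have := j.isLt; omega⟩)).prod

section Monomial

variable {ι A : Type*} {m k : ℕ}

theorem chernMonomial_insertNth_eq_zero [MonoidWithZero A] (hk : 2 * k ≤ m + 1) (θ : ι → A)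
    {Ω : ι → ι → A} {x : ι} (hΩl : ∀ i, Ω x i = 0) (hΩr : ∀ i, Ω i x = 0) (v : Fin m → ι)
    (q : Fin (m + 1)) (hq : m + 1 - 2 * k ≤ q) :
    chernMonomial k hk θ Ω (q.insertNth x v) = 0 := by
  rw [chernMonomial, List.prod_eq_zero (l := List.ofFn _), mul_zero]
  refine List.mem_ofFn.2 ⟨⟨(q - (m + 1 - 2 * k)) / 2, by omega⟩, ?_⟩
  have hx (i : Fin (m + 1)) (hi : (i : ℕ) = q) : (q.insertNth x v : Fin (m + 1) → ι) i = x := by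
    rw [Fin.ext hi, Fin.insertNth_apply_same]
  rcases Nat.mod_two_eq_zero_or_one (q - (m + 1 - 2 * k)) with h | h
  · rw [hx ⟨m + 1 - 2 * k + 2 * _, _⟩ (by dsimp only; omega), hΩl]
  · rw [hx ⟨m + 1 - 2 * k + 2 * _ + 1, _⟩ (by dsimp only; omega), hΩr]

theorem chernMonomial_insertNth [Monoid A] [HasDistribNeg A] (hk : 2 * k ≤ m)
    {θ : ι → A} (Ω : ι → ι → A) (x : ι) (v : Fin m → ι) (q : Fin (m + 1)) (hq : q ≤ m - 2 * k)
    (hθ : ∀ i, θ (v i) * θ x = -(θ x * θ (v i))) :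
    chernMonomial k (by omega) θ Ω (q.insertNth x v) =
      (-1) ^ (q : ℕ) * (θ x * chernMonomial k hk θ Ω v) := by
  have hθword : (fun i => θ ((q.insertNth x v : Fin (m + 1) → ι) i)) =
      q.insertNth (θ x) fun i => θ (v i) := by
    funext i
    cases i using Fin.succAboveCases q <;> simp
  have hθprod : ((List.ofFn fun i => θ ((q.insertNth x v : Fin (m + 1) → ι) i)).take
      (m + 1 - 2 * k)).prod =
        (-1) ^ (q : ℕ) * (θ x * ((List.ofFn fun i => θ (v i)).take (m - 2 * k)).prod) := by
    rw [hθword, Nat.sub_add_comm hk, prod_take_ofFn_insertNth_of_anticomm _ _ q hq hθ]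
  have hshift (i : ℕ) (hi : m - 2 * k + i < m) :
      (q.insertNth x v : Fin (m + 1) → ι) ⟨m + 1 - 2 * k + i, by omega⟩ =
        v ⟨m - 2 * k + i, hi⟩ := by
    have hle : q ≤ Fin.castSucc ⟨m - 2 * k + i, hi⟩ :=
      Fin.le_def.2 (hq.trans (Nat.le_add_right _ _))
    rw [← Fin.insertNth_apply_succAbove (α := fun _ => ι) q x v,
      Fin.succAbove_of_le_castSucc _ _ hle]
    exact congrArg _ (Fin.ext (by simp only [Fin.val_succ]; omega))
  rw [chernMonomial, hθprod, chernMonomial]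
  simp only [mul_assoc]
  congr 5
  funext j
  exact congrArg₂ Ω (hshift (2 * j) (by omega)) (hshift (2 * j + 1) (by omega))

end Monomial

section Expansion

variable {A : Type*} [Ring A] {m k : ℕ}

theorem chernPhi_succ_eq_sum (hk : 2 * k ≤ m) (u θ : Fin (m + 1) → A)
    (Ω : Fin (m + 1) → Fin (m + 1) → A) :
    chernPhi (m + 1) k (by omega) u θ Ω = ∑ τ : Equiv.Perm (Fin (m + 1)),
      (Equiv.Perm.sign τ : ℤ) • (u (τ 0) * chernMonomial k hk θ Ω (Fin.tail τ)) := by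
  refine Finset.sum_congr rfl fun τ _ => ?_
  have hindex (i : ℕ) (hi : m - 2 * k + i < m) :
      τ ⟨m + 1 - 2 * k + i, by omega⟩ = Fin.tail τ ⟨m - 2 * k + i, hi⟩ :=
    congrArg τ (Fin.ext (by simp only [Fin.val_succ]; omega))
  rw [chernMonomial, List.ofFn_succ, List.tail_cons, Nat.sub_right_comm, Nat.add_sub_cancel,
    mul_assoc]
  congr 5
  funext j
  exact congrArg₂ Ω (hindex (2 * j) (by omega)) (hindex (2 * j + 1) (by omega))

/-- The part of `chernPhi (m + 2) k` that comes from the permutations `τ` with `τ (q + 1) = 0`. Such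
a `τ` is encoded by the permutation `ρ` whose word is that of `τ` without the letter `0`, shifted
down by one; then `sgn τ = (-1) ^ (q + 1) * sgn ρ`. -/
def chernPhiAt (hk : 2 * k ≤ m + 1) (u θ : Fin (m + 2) → A) (Ω : Fin (m + 2) → Fin (m + 2) → A)
    (q : Fin (m + 1)) : A :=
  (-1 : ℤ) ^ (q + 1 : ℕ) • ∑ ρ : Equiv.Perm (Fin (m + 1)), (Equiv.Perm.sign ρ : ℤ) •
    (u (ρ 0).succ * chernMonomial k hk θ Ω (q.insertNth 0 fun i => (ρ i.succ).succ))

theorem chernPhi_eq_add_sum_chernPhiAt (hk : 2 * k ≤ m + 1) (u θ : Fin (m + 2) → A)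
    (Ω : Fin (m + 2) → Fin (m + 2) → A) :
    chernPhi (m + 2) k (by omega) u θ Ω =
      u 0 * chernPsi (m + 1) k hk (fun i => θ i.succ) (fun i j => Ω i.succ j.succ) +
        ∑ q, chernPhiAt hk u θ Ω q := by
  have hword (q : Fin (m + 1)) (ρ : Equiv.Perm (Fin (m + 1))) :
      (q.succ.insertNth 0 (Fin.succ ∘ ρ) : Fin (m + 2) → Fin (m + 2)) =
        Fin.cons (ρ 0).succ (q.insertNth 0 fun i => (ρ i.succ).succ) := by
    rw [← Fin.insertNth_succ_cons]
    exact congrArg _ (Fin.cons_self_tail _).symm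
  rw [chernPhi_succ_eq_sum hk, sum_sign_smul_perm_succ
    (f := fun v => u (v 0) * chernMonomial k hk θ Ω (Fin.tail v)), Fin.sum_univ_succ]
  congr 1
  · simp only [Fin.val_zero, pow_zero, one_smul, Fin.insertNth_zero', Fin.cons_zero, Fin.tail_cons,
      chernPsi, Finset.mul_sum, mul_smul_comm]
    rfl
  · simp only [hword, Fin.cons_zero, Fin.tail_cons, Fin.val_succ, chernPhiAt]

theorem chernPhiAt_eq_zero (hk : 2 * k ≤ m + 1) (u θ : Fin (m + 2) → A)
    {Ω : Fin (m + 2) → Fin (m + 2) → A} (hΩl : ∀ j, Ω 0 j = 0) (hΩr : ∀ j, Ω j 0 = 0)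
    (q : Fin (m + 1)) (hq : m + 1 - 2 * k ≤ q) : chernPhiAt hk u θ Ω q = 0 := by
  simp only [chernPhiAt, chernMonomial_insertNth_eq_zero hk θ hΩl hΩr _ q hq, mul_zero, smul_zero,
    Finset.sum_const_zero]

theorem chernPhiAt_eq_neg_mul_chernPhi (hk : 2 * k ≤ m) {u θ : Fin (m + 2) → A}
    (Ω : Fin (m + 2) → Fin (m + 2) → A) (hu : ∀ i : Fin (m + 1), Commute (u i.succ) (θ 0))
    (hθ : ∀ i : Fin (m + 1), θ i.succ * θ 0 = -(θ 0 * θ i.succ))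
    (q : Fin (m + 1)) (hq : q ≤ m - 2 * k) :
    chernPhiAt (k := k) (by omega) u θ Ω q =
      -(θ 0 * chernPhi (m + 1) k (by omega) (fun i => u i.succ) (fun i => θ i.succ)
        fun i j => Ω i.succ j.succ) := by
  have hterm (ρ : Equiv.Perm (Fin (m + 1))) :
      u (ρ 0).succ * chernMonomial k (by omega) θ Ω (q.insertNth 0 fun i => (ρ i.succ).succ) =
        (-1 : ℤ) ^ (q : ℕ) • (θ 0 * (u (ρ 0).succ *
          chernMonomial k hk (fun i => θ i.succ) (fun i j => Ω i.succ j.succ) (Fin.tail ρ))) := by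
    rw [chernMonomial_insertNth hk Ω 0 _ q hq fun _ => hθ _, ← mul_assoc (θ 0), ← (hu _).eq,
      mul_assoc, zsmul_eq_mul]
    push_cast
    rw [← mul_assoc, ((Commute.neg_one_right _).pow_right _).eq, mul_assoc]
    rfl
  have hsign : (-1 : ℤ) ^ (q : ℕ) * (-1) ^ (q + 1 : ℕ) = -1 := by
    rw [pow_succ, ← mul_assoc, ← mul_pow]
    simp
  simp only [chernPhiAt, hterm, smul_comm _ ((-1 : ℤ) ^ (q : ℕ)), ← Finset.smul_sum]
  rw [smul_smul, hsign, neg_one_smul]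
  simp only [chernPhi_succ_eq_sum hk, Finset.mul_sum, mul_smul_comm]

theorem chernPhi_eq_mul_chernPsi_sub (hk : 2 * k ≤ m) {u θ : Fin (m + 2) → A}
    {Ω : Fin (m + 2) → Fin (m + 2) → A} (hu : ∀ i : Fin (m + 1), Commute (u i.succ) (θ 0))
    (hθ : ∀ i : Fin (m + 1), θ i.succ * θ 0 = -(θ 0 * θ i.succ))
    (hΩl : ∀ j, Ω 0 j = 0) (hΩr : ∀ j, Ω j 0 = 0) :
    chernPhi (m + 2) k (by omega) u θ Ω =
      u 0 * chernPsi (m + 1) k (by omega) (fun i => θ i.succ) (fun i j => Ω i.succ j.succ) -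
      (m + 1 - 2 * k) • (θ 0 * chernPhi (m + 1) k (by omega) (fun i => u i.succ)
        (fun i => θ i.succ) fun i j => Ω i.succ j.succ) := by
  have hk' : 2 * k ≤ m + 1 := by omega
  set Υ := chernPhi (m + 1) k (by omega) (fun i => u i.succ) (fun i => θ i.succ)
    fun i j => Ω i.succ j.succ
  have hAt (q : Fin (m + 1)) :
      chernPhiAt hk' u θ Ω q = if (q : ℕ) < m + 1 - 2 * k then -(θ 0 * Υ) else 0 := by
    split_ifs with hq
    · exact chernPhiAt_eq_neg_mul_chernPhi hk Ω hu hθ q (by omega)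
    · exact chernPhiAt_eq_zero hk' u θ hΩl hΩr q (not_lt.1 hq)
  have hsum : ∑ q, chernPhiAt hk' u θ Ω q = -((m + 1 - 2 * k) • (θ 0 * Υ)) := by
    simp only [hAt, ← Finset.sum_filter, Finset.sum_const, Fin.card_filter_val_lt, smul_neg,
      min_eq_right (Nat.sub_le _ _)]
  rw [chernPhi_eq_add_sum_chernPhiAt hk', hsum, sub_eq_add_neg]

theorem chernPhi_eq_mul_chernPsi (hk : 2 * k = m + 1) (u θ : Fin (m + 2) → A)
    {Ω : Fin (m + 2) → Fin (m + 2) → A} (hΩl : ∀ j, Ω 0 j = 0) (hΩr : ∀ j, Ω j 0 = 0) :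
    chernPhi (m + 2) k (by omega) u θ Ω =
      u 0 * chernPsi (m + 1) k hk.le (fun i => θ i.succ) (fun i j => Ω i.succ j.succ) := by
  rw [chernPhi_eq_add_sum_chernPhiAt hk.le, Finset.sum_eq_zero, add_zero]
  exact fun q _ => chernPhiAt_eq_zero hk.le u θ hΩl hΩr q (by omega)

end Expansion

theorem chernPhi_decomposition_general (m : ℕ) {A : Type*} [Ring A] (u θ : Fin (m + 2) → A)
    (Ω : Fin (m + 2) → Fin (m + 2) → A)
    (hu : ∀ i : Fin (m + 1), Commute (u i.succ) (θ 0))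
    (hθ : ∀ i : Fin (m + 1), θ i.succ * θ 0 = -(θ 0 * θ i.succ))
    (hΩl : ∀ j, Ω 0 j = 0) (hΩr : ∀ j, Ω j 0 = 0) :
    (∀ k, ∀ hk : k ≤ m / 2,
        chernPhi (m + 2) k (by omega) u θ Ω
          = u 0 *
              chernPsi (m + 1) k (by omega) (fun i => θ i.succ) (fun i j => Ω i.succ j.succ)
            - (m + 2 - 2 * k - 1) •
              (θ 0 *
                chernPhi (m + 1) k (by omega)
                  (fun i => u i.succ) (fun i => θ i.succ) (fun i j => Ω i.succ j.succ))) ∧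
    (Odd (m + 2) →
      chernPhi (m + 2) ((m + 1) / 2) (by omega) u θ Ω
        = u 0 *
            chernPsi (m + 1) ((m + 1) / 2) (by omega)
              (fun i => θ i.succ) (fun i j => Ω i.succ j.succ)) := by
  refine ⟨fun k hk => ?_, fun ⟨r, hr⟩ => ?_⟩
  · rw [Nat.sub_right_comm]
    exact chernPhi_eq_mul_chernPsi_sub (by omega) hu hθ hΩl hΩr
  · exact chernPhi_eq_mul_chernPsi (by omega) u θ hΩl hΩr

/-- The decomposition `Φ_k = u₁·Ξ_k − (n−2k−1)·θ₁·Υ_k` for `0 ≤ k ≤ ⌊(n−2)/2⌋`, together with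
`Φ_{(n−1)/2} = u₁·Ξ_{(n−1)/2}` when `n` is odd, for central `u_i`, pairwise anticommuting
`θ_i`, and central antisymmetric `Ω_{ij}` with `Ω_{1j} = 0`. Here `Ξ_k` and `Υ_k` are the
corresponding sums over permutations of `{2, …, n}`. -/
theorem chernPhi_decomposition (n : ℕ) (hn : 2 ≤ n) {A : Type*} [Ring A]
    (u θ : Fin n → A) (Ω : Fin n → Fin n → A)
    (hu : ∀ (i : Fin n) (a : A), Commute (u i) a)
    (hθ : ∀ i j : Fin n, i ≠ j → θ i * θ j = -(θ j * θ i))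
    (hΩc : ∀ (i j : Fin n) (a : A), Commute (Ω i j) a)
    (hΩa : ∀ i j : Fin n, Ω i j = -Ω j i)
    (hΩ1 : ∀ j : Fin n, Ω ⟨0, by omega⟩ j = 0) :
    (∀ k, ∀ hk : k ≤ (n - 2) / 2,
        chernPhi n k (by omega) u θ Ω
          = u ⟨0, by omega⟩ *
              chernPsi (n - 1) k (by omega)
                (fun i => θ (embSucc n i)) (fun i j => Ω (embSucc n i) (embSucc n j))
            - (n - 2 * k - 1) •
              (θ ⟨0, by omega⟩ *
                chernPhi (n - 1) k (by omega)
                  (fun i => u (embSucc n i)) (fun i => θ (embSucc n i))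
                  (fun i j => Ω (embSucc n i) (embSucc n j)))) ∧
    (Odd n →
      chernPhi n ((n - 1) / 2) (by omega) u θ Ω
        = u ⟨0, by omega⟩ *
            chernPsi (n - 1) ((n - 1) / 2) (by omega)
              (fun i => θ (embSucc n i)) (fun i j => Ω (embSucc n i) (embSucc n j))) := by
  obtain ⟨m, rfl⟩ : ∃ m, n = m + 2 := ⟨n - 2, by omega⟩
  exact chernPhi_decomposition_general m u θ Ω (fun i => hu _ _)
    (fun i => hθ _ _ i.succ_ne_zero) hΩ1 fun j => (hΩa j _).trans (neg_eq_zero.2 (hΩ1 j))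
end

section
/- In the setting of the previous algebraic statement (n ≥ 2; central s, c with s² + c² = 1; δ with δ² = 0 anticommuting with the θ^e_i and commuting with all even elements; central u^e_i; pairwise anticommuting θ^e_i with (θ^e_i)² = 0; u_1 = c, u_i = s·u^e_i, θ_1 = −s·δ, θ_i = s·θ^e_i + c·δ·u^e_i), assume in addition that Σ_{i=2}^n (u^e_i)² = 1 and Σ_{i=2}^n u^e_i·θ^e_i = 0. Then Φ_0 = Σ_{τ ∈ S_n} sgn(τ)·u_{τ(1)}·θ_{τ(2)}·⋯·θ_{τ(n)} satisfies Φ_0 = (n−1)·s^{n−2}·δ·Φ^e_0, where Φ^e_0 = Σ_ρ sgn(ρ)·u^e_{ρ(2)}·θ^e_{ρ(3)}·⋯·θ^e_{ρ(n)} is summed over all permutations ρ of {2,…,n}. -/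
open Finset

/-!
When the `θ_i` anticommute pairwise, all permutations with the same first value contribute the same
term to `Φ₀`, so `Φ₀` is `(n - 1)!` times the contraction `∑ i, ± u_i ∏_{j ≠ i} θ_j`. The factor
`n - 1` of the theorem is `(n - 1)! / (n - 2)!`, and it remains to compare contractions.

As `δ² = 0`, the product of the `s θᵉ_i + c uᵉ_i δ` is affine in `δ`: its linear part is `δ` times
the contraction of the `s θᵉ_i` by the `c uᵉ_i`. Together with `θ_1 = -s δ` this produces
`(s² + c²) s^{n-2} δ` times the equatorial contraction, plus a multiple of `∏ θᵉ_i`. This product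
is zero: multiplying the relation `∑ uᵉ_i θᵉ_i = 0` by the product of the `θᵉ_j` with `j ≠ p`
leaves only `± uᵉ_p ∏ θᵉ_i`, and the `uᵉ_p` generate the unit ideal.
-/

open scoped Function

/-- The relation `a b = -b a` satisfied by two odd elements of a graded-commutative algebra. -/
def Anticommute {A : Type*} [Ring A] (a b : A) : Prop :=
  a * b = -(b * a)

namespace Anticommute

variable {A : Type*} [Ring A]

theorem symm {a b : A} (h : Anticommute a b) : Anticommute b a := by
  rw [Anticommute, h, neg_neg]

instance : Std.Symm (Anticommute (A := A)) :=
  ⟨fun _ _ => symm⟩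

theorem neg_left {a b : A} (h : Anticommute a b) : Anticommute (-a) b := by
  simpa only [Anticommute, neg_mul, mul_neg, neg_inj] using h

theorem add_right {a b d : A} (hb : Anticommute a b) (hd : Anticommute a d) :
    Anticommute a (b + d) := by
  rw [Anticommute, mul_add, hb, hd, add_mul, neg_add]

theorem smul_right {R : Type*} [CommRing R] [Algebra R A] {a b : A}
    (h : Anticommute a b) (r : R) : Anticommute a (r • b) := by
  rw [Anticommute, mul_smul_comm, h, smul_mul_assoc, smul_neg]

theorem of_mul_self_eq_zero {a : A} (h : a * a = 0) : Anticommute a a := by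
  rw [Anticommute, h, neg_zero]

end Anticommute

theorem exists_perm_succAbove {m : ℕ} (τ : Equiv.Perm (Fin (m + 1))) :
    ∃ e : Equiv.Perm (Fin m), (∀ j, τ j.succ = (τ 0).succAbove (e j)) ∧
      Equiv.Perm.sign τ = (-1) ^ (τ 0 : ℕ) * Equiv.Perm.sign e := by
  obtain ⟨⟨p, e⟩, h⟩ := Equiv.Perm.decomposeFin.symm.surjective ((τ 0).cycleRange * τ)
  obtain rfl : p = 0 := by
    rw [← Equiv.Perm.decomposeFin_symm_apply_zero p e, h, Equiv.Perm.mul_apply,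
      Fin.cycleRange_self]
  refine ⟨e, fun j => ?_, ?_⟩
  · have hj : (τ 0).cycleRange (τ j.succ) = (e j).succ := by
      rw [← Equiv.Perm.mul_apply, ← h, Equiv.Perm.decomposeFin_symm_apply_succ, Equiv.swap_self,
        Equiv.refl_apply]
    rw [← Fin.cycleRange_symm_succ, ← hj, Equiv.symm_apply_apply]
  · have hsign : Equiv.Perm.sign e = (-1) ^ (τ 0 : ℕ) * Equiv.Perm.sign τ := by
      rw [← Fin.sign_cycleRange, ← Equiv.Perm.sign_mul, ← h, Equiv.Perm.decomposeFin.symm_sign,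
        if_pos rfl, one_mul]
    rw [hsign, ← mul_assoc, Int.units_mul_self, one_mul]

theorem sum_perm_apply_zero {M : Type*} [AddCommMonoid M] {m : ℕ} (f : Fin (m + 1) → M) :
    ∑ τ : Equiv.Perm (Fin (m + 1)), f (τ 0) = m.factorial • ∑ p, f p := by
  rw [← Equiv.Perm.decomposeFin.symm.sum_comp, Fintype.sum_prod_type]
  simp only [Equiv.Perm.decomposeFin_symm_apply_zero, sum_const, card_univ, Fintype.card_perm,
    Fintype.card_fin, smul_sum]

section Products

variable {R A : Type*} [CommRing R] [Ring A] [Algebra R A] {m : ℕ}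

theorem mul_prod_ofFn_succAbove (θ : Fin (m + 1) → A) (hθ : Pairwise (Anticommute on θ))
    (p : Fin (m + 1)) :
    θ p * (List.ofFn fun j => θ (p.succAbove j)).prod
      = (-1 : ℤˣ) ^ (p : ℕ) • (List.ofFn θ).prod := by
  induction m with
  | zero => simp [Fin.fin_one_eq_zero p]
  | succ m ih =>
    cases p using Fin.cases with
    | zero => simp [List.ofFn_succ]
    | succ p =>
      have hswap : Anticommute (θ p.succ) (θ 0) := hθ (Fin.succ_ne_zero p)
      have htail := ih (fun j => θ j.succ) (hθ.comp_of_injective (Fin.succ_injective _)) p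
      simp only [List.ofFn_succ (n := m), List.ofFn_succ (f := θ), List.prod_cons,
        Fin.succ_succAbove_zero, Fin.succ_succAbove_succ] at htail ⊢
      rw [← mul_assoc, hswap, neg_mul, mul_assoc, htail, mul_smul_comm, Fin.val_succ, pow_succ,
        mul_neg_one, Units.neg_smul]

theorem prod_ofFn_perm (θ : Fin m → A) (hθ : Pairwise (Anticommute on θ))
    (τ : Equiv.Perm (Fin m)) :
    (List.ofFn fun i => θ (τ i)).prod = Equiv.Perm.sign τ • (List.ofFn θ).prod := by
  induction m with
  | zero => simp [Subsingleton.elim τ 1]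
  | succ m ih =>
    obtain ⟨e, he, hsign⟩ := exists_perm_succAbove τ
    rw [List.ofFn_succ, List.prod_cons]
    simp only [he]
    rw [ih (fun j => θ ((τ 0).succAbove j))
        (hθ.comp_of_injective Fin.succAbove_right_injective) e,
      mul_smul_comm, mul_prod_ofFn_succAbove θ hθ, smul_smul, hsign, mul_comm]

theorem mul_prod_ofFn_eq_zero (θ : Fin m → A) (hθ : Pairwise (Anticommute on θ)) (p : Fin m)
    (hp : θ p * θ p = 0) : θ p * (List.ofFn θ).prod = 0 := by
  cases m with
  | zero => exact p.elim0
  | succ m =>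
    rw [← smul_eq_zero_iff_eq ((-1 : ℤˣ) ^ (p : ℕ)), ← mul_smul_comm,
      ← mul_prod_ofFn_succAbove θ hθ p, ← mul_assoc, hp, zero_mul]

theorem prod_ofFn_smul (s : R) (θ : Fin m → A) :
    (List.ofFn fun i => s • θ i).prod = s ^ m • (List.ofFn θ).prod := by
  simpa only [List.length_ofFn, List.map_ofFn, Function.comp_def] using
    (List.smul_prod (List.ofFn θ) s).symm

theorem sum_smul_mul_prod_ofFn_succAbove (u : Fin (m + 1) → R) (θ : Fin (m + 1) → A)
    (hθ : Pairwise (Anticommute on θ)) (hθ2 : ∀ i, θ i * θ i = 0) (p : Fin (m + 1)) :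
    (∑ i, u i • θ i) * (List.ofFn fun j => θ (p.succAbove j)).prod
      = (-1 : ℤˣ) ^ (p : ℕ) • u p • (List.ofFn θ).prod := by
  have hvanish (j : Fin m) :
      θ (p.succAbove j) * (List.ofFn fun j => θ (p.succAbove j)).prod = 0 :=
    mul_prod_ofFn_eq_zero (fun j => θ (p.succAbove j))
      (hθ.comp_of_injective Fin.succAbove_right_injective) j (hθ2 _)
  rw [Fin.sum_univ_succAbove _ p, add_mul, sum_mul]
  simp only [smul_mul_assoc, hvanish, smul_zero, sum_const_zero, add_zero]
  rw [mul_prod_ofFn_succAbove θ hθ p, smul_comm]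

theorem prod_ofFn_eq_zero_of_sum_smul_eq_zero (u v : Fin (m + 1) → R)
    (θ : Fin (m + 1) → A) (hθ : Pairwise (Anticommute on θ))
    (hθ2 : ∀ i, θ i * θ i = 0) (hvu : ∑ i, v i * u i = 1) (huθ : ∑ i, u i • θ i = 0) :
    (List.ofFn θ).prod = 0 := by
  have hann (p : Fin (m + 1)) : u p • (List.ofFn θ).prod = 0 := by
    rw [← smul_eq_zero_iff_eq ((-1 : ℤˣ) ^ (p : ℕ)),
      ← sum_smul_mul_prod_ofFn_succAbove u θ hθ hθ2 p, huθ, zero_mul]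
  calc (List.ofFn θ).prod = (∑ i, v i * u i) • (List.ofFn θ).prod := by rw [hvu, one_smul]
    _ = ∑ i, v i • u i • (List.ofFn θ).prod := by simp only [sum_smul, mul_smul]
    _ = 0 := by simp only [hann, smul_zero, sum_const_zero]

end Products

section Contraction

variable {R A : Type*} [CommRing R] [Ring A] [Algebra R A] {m : ℕ}

/-- The form `Φ₀ = ∑ τ, sgn τ · u_{τ 0} θ_{τ 1} ⋯ θ_{τ m}`, which is `m!` times the volume form
of the fiber sphere. Indices start at `0`, and the central coefficients `u_i` are modelled as
scalars. -/
def chernPhi0 (u : Fin (m + 1) → R) (θ : Fin (m + 1) → A) : A :=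
  ∑ τ : Equiv.Perm (Fin (m + 1)),
    Equiv.Perm.sign τ • u (τ 0) • (List.ofFn fun j : Fin m => θ (τ j.succ)).prod

/-- The contraction `∑ i, (-1)^i u_i θ_0 ⋯ θ̂_i ⋯ θ_m` of `θ_0 ⋯ θ_m` by the vector with
components `u_i`. -/
def contractedProd (u : Fin (m + 1) → R) (θ : Fin (m + 1) → A) : A :=
  ∑ i : Fin (m + 1), (-1 : ℤˣ) ^ (i : ℕ) • u i • (List.ofFn fun j => θ (i.succAbove j)).prod

theorem chernPhi0_eq_factorial_smul_contractedProd (u : Fin (m + 1) → R) (θ : Fin (m + 1) → A)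
    (hθ : Pairwise (Anticommute on θ)) :
    chernPhi0 u θ = m.factorial • contractedProd u θ := by
  rw [contractedProd, ← sum_perm_apply_zero, chernPhi0]
  refine sum_congr rfl fun τ _ => ?_
  obtain ⟨e, he, hsign⟩ := exists_perm_succAbove τ
  simp only [he]
  rw [prod_ofFn_perm (fun j => θ ((τ 0).succAbove j))
      (hθ.comp_of_injective Fin.succAbove_right_injective) e,
    smul_comm (u (τ 0)), smul_smul, hsign, mul_assoc, Int.units_mul_self, mul_one]

theorem contractedProd_fin_one (u : Fin 1 → R) (θ : Fin 1 → A) :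
    contractedProd u θ = u 0 • (1 : A) := by
  simp [contractedProd]

theorem contractedProd_succ (u : Fin (m + 2) → R) (θ : Fin (m + 2) → A) :
    contractedProd u θ = u 0 • (List.ofFn fun j : Fin (m + 1) => θ j.succ).prod
      - θ 0 * contractedProd (fun j => u j.succ) (fun j => θ j.succ) := by
  rw [contractedProd, Fin.sum_univ_succ, contractedProd, mul_sum, sub_eq_add_neg,
    ← sum_neg_distrib]
  congr 1
  · simp
  · refine sum_congr rfl fun i _ => ?_
    simp only [List.ofFn_succ, List.prod_cons, Fin.succ_succAbove_zero, Fin.succ_succAbove_succ,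
      Fin.val_succ, pow_succ, mul_neg_one, Units.neg_smul, mul_smul_comm]

theorem contractedProd_smul_smul (r s : R) (u : Fin (m + 1) → R) (θ : Fin (m + 1) → A) :
    contractedProd (fun i => r * u i) (fun i => s • θ i)
      = (r * s ^ m) • contractedProd u θ := by
  rw [contractedProd, contractedProd, smul_sum]
  refine sum_congr rfl fun i _ => ?_
  rw [prod_ofFn_smul, smul_smul, mul_right_comm, mul_smul (r * s ^ m), smul_comm]

theorem prod_ofFn_add_smul (δ : A) (a : Fin (m + 1) → R) (θ : Fin (m + 1) → A)
    (hδ2 : δ * δ = 0) (hδθ : ∀ i, Anticommute δ (θ i)) :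
    (List.ofFn fun i => θ i + a i • δ).prod
      = (List.ofFn θ).prod + δ * contractedProd a θ := by
  induction m with
  | zero => simp [contractedProd_fin_one]
  | succ m ih =>
    have hδδ (x : A) : δ * (δ * x) = 0 := by rw [← mul_assoc, hδ2, zero_mul]
    have hswap (x : A) : θ 0 * (δ * x) = -(δ * (θ 0 * x)) := by
      rw [← mul_assoc, (hδθ 0).symm, neg_mul, mul_assoc]
    rw [List.ofFn_succ, List.prod_cons,
      ih (fun j => a j.succ) (fun j => θ j.succ) fun i => hδθ i.succ, contractedProd_succ,
      List.ofFn_succ (f := θ), List.prod_cons]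
    simp only [add_mul, mul_add, mul_sub, smul_mul_assoc, mul_smul_comm, hswap, hδδ]
    module

theorem mul_prod_ofFn_add_smul (δ : A) (a : Fin m → R) (θ : Fin m → A)
    (hδ2 : δ * δ = 0) (hδθ : ∀ i, Anticommute δ (θ i)) :
    δ * (List.ofFn fun i => θ i + a i • δ).prod = δ * (List.ofFn θ).prod := by
  cases m with
  | zero => simp
  | succ m =>
    rw [prod_ofFn_add_smul δ a θ hδ2 hδθ, mul_add, ← mul_assoc δ δ, hδ2, zero_mul, add_zero]

theorem mul_contractedProd_add_smul (δ : A) (u a : Fin (m + 1) → R) (θ : Fin (m + 1) → A)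
    (hδ2 : δ * δ = 0) (hδθ : ∀ i, Anticommute δ (θ i)) :
    δ * contractedProd u (fun i => θ i + a i • δ) = δ * contractedProd u θ := by
  simp only [contractedProd, mul_sum, mul_smul_comm]
  refine sum_congr rfl fun i _ => ?_
  rw [mul_prod_ofFn_add_smul δ (fun j => a (i.succAbove j)) _ hδ2 fun j => hδθ _]

end Contraction

section Pullback

variable {R A : Type*} [CommRing R] [Ring A] [Algebra R A] {m : ℕ}

/-- The fiber coordinates `(cos φ, sin φ · u)` of the point at polar angle `φ` above the point `u`
of the equatorial sphere, with `s = sin φ` and `c = cos φ`. -/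
def pullbackCoord (s c : R) (u : Fin m → R) : Fin (m + 1) → R :=
  Fin.cons c fun i => s * u i

/-- The forms `θ_0 = -sin φ dφ` and `θ_i = sin φ · θᵉ_i + cos φ · uᵉ_i dφ`, the covariant
differentials of the coordinates `pullbackCoord`, with `s = sin φ`, `c = cos φ` and `δ = dφ`. -/
def pullbackForm (s c : R) (δ : A) (u : Fin m → R) (θ : Fin m → A) : Fin (m + 1) → A :=
  Fin.cons (-(s • δ)) fun i => s • θ i + (c * u i) • δ

theorem pairwise_anticommute_pullbackForm (s c : R) (δ : A) (u : Fin m → R) (θ : Fin m → A)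
    (hδ2 : δ * δ = 0) (hδθ : ∀ i, Anticommute δ (θ i)) (hθ : Pairwise (Anticommute on θ)) :
    Pairwise (Anticommute on pullbackForm s c δ u θ) := by
  have hδ (i : Fin m) : Anticommute δ (s • θ i + (c * u i) • δ) :=
    ((hδθ i).smul_right s).add_right ((Anticommute.of_mul_self_eq_zero hδ2).smul_right _)
  refine pairwise_fin_succ_iff_of_isSymm.2 ⟨fun i => ?_, fun i j hij => ?_⟩
  · exact ((hδ i).symm.smul_right s).symm.neg_left
  · have hsθ : Anticommute (s • θ j) (s • θ i) :=
      ((hθ hij).smul_right s).symm.smul_right s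
    exact (hsθ.add_right (((hδθ j).smul_right s).symm.smul_right _)).symm.add_right
      ((hδ i).symm.smul_right _)

theorem contractedProd_pullbackForm (s c : R) (δ : A) (u : Fin (m + 1) → R) (θ : Fin (m + 1) → A)
    (hδ2 : δ * δ = 0) (hδθ : ∀ i, Anticommute δ (θ i)) :
    contractedProd (pullbackCoord s c u) (pullbackForm s c δ u θ)
      = (c * s ^ (m + 1)) • (List.ofFn θ).prod
        + ((s ^ 2 + c ^ 2) * s ^ m) • (δ * contractedProd u θ) := by
  have hδsθ (i : Fin (m + 1)) : Anticommute δ (s • θ i) := (hδθ i).smul_right s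
  simp only [contractedProd_succ, pullbackCoord, pullbackForm, Fin.cons_zero, Fin.cons_succ]
  rw [prod_ofFn_add_smul δ (fun i => c * u i) _ hδ2 hδsθ, neg_mul, smul_mul_assoc,
    mul_contractedProd_add_smul δ _ (fun i => c * u i) _ hδ2 hδsθ, prod_ofFn_smul,
    contractedProd_smul_smul, contractedProd_smul_smul]
  simp only [mul_smul_comm]
  module

theorem chernPhi0_pullbackForm (s c : R) (δ : A) (u : Fin (m + 1) → R) (θ : Fin (m + 1) → A)
    (hsc : s ^ 2 + c ^ 2 = 1) (hδ2 : δ * δ = 0) (hδθ : ∀ i, Anticommute δ (θ i))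
    (hθ : Pairwise (Anticommute on θ)) (hθ2 : ∀ i, θ i * θ i = 0)
    (hsum2 : ∑ i, u i ^ 2 = 1) (hsum1 : ∑ i, u i • θ i = 0) :
    chernPhi0 (pullbackCoord s c u) (pullbackForm s c δ u θ)
      = (m + 1) • (s ^ m • (δ * chernPhi0 u θ)) := by
  have hprod : (List.ofFn θ).prod = 0 :=
    prod_ofFn_eq_zero_of_sum_smul_eq_zero u u θ hθ hθ2 (by simpa only [sq] using hsum2) hsum1
  rw [chernPhi0_eq_factorial_smul_contractedProd _ _
      (pairwise_anticommute_pullbackForm s c δ u θ hδ2 hδθ hθ),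
    chernPhi0_eq_factorial_smul_contractedProd u θ hθ,
    contractedProd_pullbackForm s c δ u θ hδ2 hδθ, hprod, smul_zero, zero_add, hsc, one_mul,
    mul_smul_comm, smul_comm (s ^ m) m.factorial, smul_smul, Nat.factorial_succ]

end Pullback

/-- In the setting of the pullback formula (central `s, c` with `s² + c² = 1`; `δ` with
`δ² = 0` anticommuting with the `θᵉ_i` and commuting with the even elements; central `uᵉ_i`;
pairwise anticommuting square-zero `θᵉ_i`; `u₁ = c`, `u_i = s·uᵉ_i`, `θ₁ = −s·δ`,
`θ_i = s·θᵉ_i + c·δ·uᵉ_i`), if moreover `Σ (uᵉ_i)² = 1` and `Σ uᵉ_i·θᵉ_i = 0`, then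
`Φ₀ = Σ_τ sgn(τ)·u_{τ(1)}·θ_{τ(2)}⋯θ_{τ(n)}` satisfies `Φ₀ = (n−1)·s^{n−2}·δ·Φᵉ₀`,
where `Φᵉ₀ = Σ_ρ sgn(ρ)·uᵉ_{ρ(2)}·θᵉ_{ρ(3)}⋯θᵉ_{ρ(n)}`. -/
theorem chernPhi0_pullback (n : ℕ) (hn : 2 ≤ n) {A : Type*} [Ring A]
    (s c δ : A) (ue θe : Fin (n - 1) → A)
    (hs : ∀ a : A, Commute s a) (hc : ∀ a : A, Commute c a)
    (hsc : s ^ 2 + c ^ 2 = 1)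
    (hδ2 : δ * δ = 0)
    (hδθe : ∀ i : Fin (n - 1), δ * θe i = -(θe i * δ))
    (hδs : Commute δ s) (hδc : Commute δ c)
    (hδue : ∀ i : Fin (n - 1), Commute δ (ue i))
    (hue : ∀ (i : Fin (n - 1)) (a : A), Commute (ue i) a)
    (hθe : ∀ i j : Fin (n - 1), i ≠ j → θe i * θe j = -(θe j * θe i))
    (hθe2 : ∀ i : Fin (n - 1), θe i * θe i = 0)
    (hθes : ∀ i : Fin (n - 1), Commute (θe i) s)
    (hθec : ∀ i : Fin (n - 1), Commute (θe i) c)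
    (hθeue : ∀ i j : Fin (n - 1), Commute (θe i) (ue j))
    (u θ : Fin n → A)
    (hu0 : u ⟨0, by omega⟩ = c)
    (hui : ∀ i : Fin (n - 1), u (embSucc n i) = s * ue i)
    (hθ0 : θ ⟨0, by omega⟩ = -(s * δ))
    (hθi : ∀ i : Fin (n - 1), θ (embSucc n i) = s * θe i + c * δ * ue i)
    (hsum2 : ∑ i : Fin (n - 1), ue i ^ 2 = 1)
    (hsum1 : ∑ i : Fin (n - 1), ue i * θe i = 0) :
    ∑ τ : Equiv.Perm (Fin n), (Equiv.Perm.sign τ : ℤ) •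
        (u (τ ⟨0, by omega⟩) * ((List.ofFn fun i => θ (τ i)).tail).prod)
      = (n - 1) •
          (s ^ (n - 2) * δ *
            ∑ ρ : Equiv.Perm (Fin (n - 1)), (Equiv.Perm.sign ρ : ℤ) •
              (ue (ρ ⟨0, by omega⟩) * ((List.ofFn fun i => θe (ρ i)).tail).prod)) := by
  obtain ⟨m, rfl⟩ : ∃ m, n = m + 2 := ⟨n - 2, by omega⟩
  have central {x : A} (h : ∀ a, Commute x a) : x ∈ Subring.center A :=
    Subring.mem_center_iff.2 fun a => (h a).symm
  let s' : Subring.center A := ⟨s, central hs⟩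
  let c' : Subring.center A := ⟨c, central hc⟩
  let ue' (i : Fin (m + 1)) : Subring.center A := ⟨ue i, central (hue i)⟩
  have hu : u = fun i => ((pullbackCoord s' c' ue' i : Subring.center A) : A) :=
    funext (Fin.cases hu0 hui)
  have hθ : θ = pullbackForm s' c' δ ue' θe := by
    refine funext (Fin.cases hθ0 fun i => (hθi i).trans ?_)
    rw [mul_assoc, (hδue i).eq, ← mul_assoc]
    rfl
  have key := chernPhi0_pullbackForm s' c' δ ue' θe (Subtype.ext hsc) hδ2 hδθe hθe hθe2
    (Subtype.ext (by simpa using hsum2)) hsum1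
  subst hu hθ
  simpa [chernPhi0, List.ofFn_succ, Units.smul_def, Subring.smul_def, mul_assoc] using key
end
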